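/- arXiv:2501.11490 — 13 statements merged into one kernel-verified Lean document; each statement's English description precedes it below -/
import Mathlib

section
/- Let s, t be nonzero real numbers with s² + 4t ≥ 0 and assume {k}_{s,t} ≠ 0 for all 1 ≤ k ≤ d+1. Then for every integer d ≥ 1 and every n ≥ 1, the generalized simplicial (d+1)-polytopic numbers satisfy {n+d \choose d+1}_{s,t} = Σ_{k=1}^{n} φ_{s,t}^{(d+1)(n−k)} · (φ'_{s,t})^{k−1} · {k+d−1 \choose d}_{s,t}. -/
/-- Generalized Fibonacci polynomials/numbers: `{0} = 0`, `{1} = 1`,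
`{n+2} = s·{n+1} + t·{n}`. -/
noncomputable def gfib (s t : ℝ) : ℕ → ℝ
  | 0 => 0
  | 1 => 1
  | n + 2 => s * gfib s t (n + 1) + t * gfib s t n

/-- Generalized fibotorial `{n}! = {1}·{2}⋯{n}`, with `{0}! = 1`. -/
noncomputable def gfibFact (s t : ℝ) (n : ℕ) : ℝ :=
  ∏ k ∈ Finset.range n, gfib s t (k + 1)

/-- Generalized fibonomial coefficient `{n choose k} = {n}!/({k}!·{n−k}!)`. -/
noncomputable def gfibBinom (s t : ℝ) (n k : ℕ) : ℝ :=
  gfibFact s t n / (gfibFact s t k * gfibFact s t (n - k))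

/-- `φ_{s,t} = (s + √(s²+4t))/2`. -/
noncomputable def phiST (s t : ℝ) : ℝ := (s + Real.sqrt (s ^ 2 + 4 * t)) / 2

/-- `φ'_{s,t} = (s − √(s²+4t))/2`. -/
noncomputable def phiST' (s t : ℝ) : ℝ := (s - Real.sqrt (s ^ 2 + 4 * t)) / 2

/-- Generalized triangular numbers `{n+1 choose 2} = {n}·{n+1}/{2}`. -/
noncomputable def gtri (s t : ℝ) (n : ℕ) : ℝ :=
  gfib s t n * gfib s t (n + 1) / gfib s t 2

/-- Generalized tetrahedral numbers
`{n+2 choose 3} = {n}·{n+1}·{n+2}/({1}·{2}·{3})`. -/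
noncomputable def gtet (s t : ℝ) (n : ℕ) : ℝ :=
  gfib s t n * gfib s t (n + 1) * gfib s t (n + 2) /
    (gfib s t 1 * gfib s t 2 * gfib s t 3)

theorem phi_add (s t : ℝ) : phiST s t + phiST' s t = s := by
  unfold phiST phiST'; ring

theorem phi_mul (s t : ℝ) (h : s ^ 2 + 4 * t ≥ 0) : phiST s t * phiST' s t = -t := by
  unfold phiST phiST'
  have := Real.sq_sqrt h
  nlinarith

theorem gfib_step (s t a b : ℝ) (h1 : a + b = s) (h2 : a * b = -t) (n : ℕ) :
    gfib s t (n + 1) = a * gfib s t n + b ^ n := by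
  induction n with
  | zero => simp [gfib]
  | succ k ih =>
    have e : gfib s t (k + 1 + 1) = s * gfib s t (k + 1) + t * gfib s t k := rfl
    have ht : t = -(a * b) := by linarith
    rw [e, pow_succ]
    have hb : b ^ k = gfib s t (k + 1) - a * gfib s t k := by linarith
    rw [hb]
    generalize gfib s t (k + 1) = x
    generalize gfib s t k = y
    rw [← h1, ht]; ring

theorem gfib_split (s t a b : ℝ) (h1 : a + b = s) (h2 : a * b = -t) (n m : ℕ) :
    gfib s t (n + m) = a ^ m * gfib s t n + b ^ n * gfib s t m := by
  induction m with
  | zero => simp [gfib]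
  | succ k ih =>
    rw [← add_assoc, gfib_step s t a b h1 h2, gfib_step s t a b h1 h2 k, ih]
    ring

theorem gfib_binet (s t a b : ℝ) (h1 : a + b = s) (h2 : a * b = -t) (n : ℕ) :
    (a - b) * gfib s t n = a ^ n - b ^ n := by
  induction n with
  | zero => simp [gfib]
  | succ k ih =>
    rw [gfib_step s t a b h1 h2]
    linear_combination a * ih

theorem gfib_double (s t a : ℝ) (h1 : a + a = s) (h2 : a * a = -t) (n : ℕ) :
    gfib s t (n + 1) = (n + 1) * a ^ n := by
  induction n with
  | zero => simp [gfib]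
  | succ k ih =>
    rw [gfib_step s t a a h1 h2, ih]
    push_cast; ring

theorem gfib_ne_zero (s t a b : ℝ) (h1 : a + b = s) (h2 : a * b = -t) (hs : s ≠ 0) (n : ℕ) :
    gfib s t (n + 1) ≠ 0 := by
  by_cases hab : a = b
  · subst hab
    rw [gfib_double s t a h1 h2]
    have ha : a ≠ 0 := by rintro rfl; apply hs; linarith
    have : (n : ℝ) + 1 ≠ 0 := by positivity
    exact mul_ne_zero this (pow_ne_zero _ ha)
  · intro h0
    have h := gfib_binet s t a b h1 h2 (n + 1)
    rw [h0, mul_zero] at h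
    have h3 : |a| ^ (n + 1) = |b| ^ (n + 1) := by
      rw [← abs_pow, ← abs_pow]; congr 1; linarith
    have h4 : |a| = |b| :=
      (pow_left_inj₀ (abs_nonneg a) (abs_nonneg b) (Nat.succ_ne_zero n)).1 h3
    rcases abs_eq_abs.1 h4 with h5 | h5
    · exact hab h5
    · apply hs; linarith

theorem gfibFact_succ (s t : ℝ) (n : ℕ) :
    gfibFact s t (n + 1) = gfibFact s t n * gfib s t (n + 1) := by
  simp [gfibFact, Finset.prod_range_succ]

theorem stmt0 (s t : ℝ) (hs : s ≠ 0) (ht : t ≠ 0) (hdisc : s ^ 2 + 4 * t ≥ 0)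
    (d : ℕ) (hd : 1 ≤ d) (hnz : ∀ k : ℕ, 1 ≤ k → k ≤ d + 1 → gfib s t k ≠ 0)
    (n : ℕ) (hn : 1 ≤ n) :
    gfibBinom s t (n + d) (d + 1) =
      ∑ k ∈ Finset.Icc 1 n,
        phiST s t ^ ((d + 1) * (n - k)) * phiST' s t ^ (k - 1) *
          gfibBinom s t (k + d - 1) d := by
  have h1 := phi_add s t
  have h2 := phi_mul s t hdisc
  have hF : ∀ m, gfibFact s t m ≠ 0 := fun m =>
    Finset.prod_ne_zero_iff.2 fun k _ => gfib_ne_zero s t _ _ h1 h2 hs k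
  have hg := gfib_ne_zero s t _ _ h1 h2 hs
  induction n, hn using Nat.le_induction with
  | base =>
    have e : 1 + d - 1 = d := by omega
    have e' : 1 + d = d + 1 := by omega
    have f0 : gfibFact s t 0 = 1 := by simp [gfibFact]
    simp [gfibBinom, e', f0, hF]
  | succ n hn ih =>
    rw [Finset.sum_Icc_succ_top (by omega)]
    have hsum : ∑ k ∈ Finset.Icc 1 n, phiST s t ^ ((d + 1) * (n + 1 - k)) *
        phiST' s t ^ (k - 1) * gfibBinom s t (k + d - 1) d
        = phiST s t ^ (d + 1) * gfibBinom s t (n + d) (d + 1) := by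
      rw [ih, Finset.mul_sum]
      refine Finset.sum_congr rfl fun k hk => ?_
      have hk' := (Finset.mem_Icc.1 hk).2
      have e : n + 1 - k = (n - k) + 1 := by omega
      rw [e, mul_add, pow_add, mul_one]; ring
    rw [hsum]
    obtain ⟨m, rfl⟩ : ∃ m, n = m + 1 := ⟨n - 1, by omega⟩
    have e1 : m + 1 + 1 + d - 1 = m + d + 1 := by omega
    have e2 : m + 1 + 1 + d = m + d + 1 + 1 := by omega
    have e3 : m + 1 + d = m + d + 1 := by omega
    have key := gfib_split s t _ _ h1 h2 (m + 1) (d + 1)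
    have e4 : m + 1 + (d + 1) = m + d + 1 + 1 := by omega
    rw [e4] at key
    have e5 : m + d + 1 + 1 - (d + 1) = m + 1 := by omega
    have e6 : m + d + 1 - (d + 1) = m := by omega
    have e7 : m + d + 1 - d = m + 1 := by omega
    simp only [gfibBinom, e1, e2, e3, e5, e6, e7, Nat.sub_self, mul_zero, pow_zero, one_mul,
      Nat.add_sub_cancel]
    rw [gfibFact_succ s t (m + d + 1), gfibFact_succ s t m, gfibFact_succ s t d, key]
    have a1 := hF (m + d + 1)
    have a2 := hF m
    have a3 := hF d
    have a4 := hg m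
    have a5 := hg d
    field_simp
end

section
/- Let s, t be nonzero real numbers with s² + 4t ≥ 0. Then for every n ≥ 1, φ_{s,t}^{n+1}·{n \choose 2}_{s,t} + (φ'_{s,t})^{n−1}·{n+1 \choose 2}_{s,t} = (⟨n⟩_{s,t}/{2}_{s,t})·({n}_{s,t})², where ⟨n⟩_{s,t} = φ_{s,t}^n + (φ'_{s,t})^n. (This is the (s,t)-analog of T_{n−1} + T_n = n².) -/
theorem gfib_roots (s t p q : ℝ) (h1 : p + q = s) (h2 : p * q = -t) (m : ℕ) :
    gfib s t (m + 1) = p * gfib s t m + q ^ m := by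
  induction m with
  | zero => simp [gfib]
  | succ k ih =>
    have h : gfib s t (k + 2) = s * gfib s t (k + 1) + t * gfib s t k := rfl
    rw [show k + 1 + 1 = k + 2 from rfl, h, pow_succ]
    linear_combination q * ih - gfib s t (k + 1) * h1 + gfib s t k * h2

theorem stmt3 (s t : ℝ) (hs : s ≠ 0) (ht : t ≠ 0) (hdisc : s ^ 2 + 4 * t ≥ 0)
    (n : ℕ) (hn : 1 ≤ n) :
    phiST s t ^ (n + 1) * gtri s t (n - 1) + phiST' s t ^ (n - 1) * gtri s t n =
      (phiST s t ^ n + phiST' s t ^ n) / gfib s t 2 * gfib s t n ^ 2 := by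
  obtain ⟨m, rfl⟩ : ∃ m, n = m + 1 := ⟨n - 1, by omega⟩
  have hr := Real.sq_sqrt hdisc
  have h1 : phiST s t + phiST' s t = s := by unfold phiST phiST'; ring
  have h2 : phiST s t * phiST' s t = -t := by
    unfold phiST phiST'; linear_combination (-1 / 4) * hr
  have a := gfib_roots s t _ _ h1 h2 m
  have b := gfib_roots s t (phiST' s t) (phiST s t) (by linarith) (by linarith) (m + 1)
  have h2s : gfib s t 2 ≠ 0 := by simpa [gfib] using hs
  simp only [gtri, Nat.add_sub_cancel]
  generalize phiST s t = p at *
  generalize phiST' s t = q at *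
  field_simp
  linear_combination (-p ^ (m + 1) * gfib s t (m + 1)) * a
    + q ^ m * gfib s t (m + 1) * b
end

section
/- Let s, t be nonzero real numbers. Then for every n ≥ 0, the generalized triangular number satisfies {n+1 \choose 2}_{s,t} = Σ_{k=1}^{n} t^{n−k}·({k}_{s,t})². (This is the (s,t)-analogue of the alternating sum of squares T_n = Σ_{k=1}^n (−1)^{n−k} k².) -/
theorem stmt4 (s t : ℝ) (hs : s ≠ 0) (ht : t ≠ 0) (n : ℕ) :
    gtri s t n = ∑ k ∈ Finset.Icc 1 n, t ^ (n - k) * gfib s t k ^ 2 := by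
  have h2 : gfib s t 2 = s := by simp [gfib]
  induction n with
  | zero => simp [gtri, gfib]
  | succ n ih =>
    have hsum : ∑ k ∈ Finset.Icc 1 n, t ^ (n + 1 - k) * gfib s t k ^ 2
        = t * ∑ k ∈ Finset.Icc 1 n, t ^ (n - k) * gfib s t k ^ 2 := by
      rw [Finset.mul_sum]
      refine Finset.sum_congr rfl fun k hk => ?_
      rw [Nat.succ_sub (Finset.mem_Icc.mp hk).2, pow_succ]
      ring
    have hrec : gfib s t (n + 1 + 1) = s * gfib s t (n + 1) + t * gfib s t n := by
      rw [gfib]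
    rw [Finset.sum_Icc_succ_top (by omega), hsum, ← ih]
    simp only [gtri, h2, hrec, Nat.sub_self, pow_zero]
    field_simp
    ring
end

section
/- Let q be a real number with q ≠ 1 and q ≠ −1. Then for every n ≥ 0, the Gaussian binomial coefficient satisfies [n+1 \choose 2]_q = Σ_{k=1}^{n} (−q)^{n−k}·((1−q^k)/(1−q))² (Schlosser's identity). -/
/-- The `q`-integer `[n]_q = 1 + q + ⋯ + q^{n−1} = (1−q^n)/(1−q)`. -/
noncomputable def qint (q : ℝ) (n : ℕ) : ℝ := (1 - q ^ n) / (1 - q)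

/-- The `q`-triangular number `[n+1 choose 2]_q = [n]_q·[n+1]_q/[2]_q`. -/
noncomputable def qtri (q : ℝ) (n : ℕ) : ℝ := qint q n * qint q (n + 1) / (1 + q)

theorem stmt5 (q : ℝ) (hq1 : q ≠ 1) (hq2 : q ≠ -1) (n : ℕ) :
    qtri q n =
      ∑ k ∈ Finset.Icc 1 n, (-q) ^ (n - k) * ((1 - q ^ k) / (1 - q)) ^ 2 := by
  have h1 : 1 - q ≠ 0 := sub_ne_zero.mpr (Ne.symm hq1)
  have h2 : 1 + q ≠ 0 := fun h => hq2 (by linarith)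
  induction n with
  | zero => simp [qtri, qint]
  | succ n ih =>
    have hs : ∑ k ∈ Finset.Icc 1 n, (-q) ^ (n + 1 - k) * ((1 - q ^ k) / (1 - q)) ^ 2
        = (-q) * qtri q n := by
      rw [ih, Finset.mul_sum]
      refine Finset.sum_congr rfl fun k hk => ?_
      have hk2 := (Finset.mem_Icc.mp hk).2
      rw [Nat.succ_sub hk2, pow_succ]
      ring
    rw [Finset.sum_Icc_succ_top (by omega), hs]
    simp only [qtri, qint, Nat.sub_self, pow_zero]
    field_simp
    ring
end

section
/- Let s, t be nonzero real numbers. Then for every n ≥ 0, the squares of consecutive generalized triangular numbers satisfy {n+2 \choose 2}_{s,t}² − t²·{n+1 \choose 2}_{s,t}² = (({n+2}_{s,t} + t·{n}_{s,t})/s)·({n+1}_{s,t})³. (This is the (s,t)-analog of T_{n+1}² − T_n² = (n+1)³.) -/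
theorem stmt6 (s t : ℝ) (hs : s ≠ 0) (ht : t ≠ 0) (n : ℕ) :
    gtri s t (n + 1) ^ 2 - t ^ 2 * gtri s t n ^ 2 =
      (gfib s t (n + 2) + t * gfib s t n) / s * gfib s t (n + 1) ^ 3 := by
  have h2 : gfib s t 2 = s := by simp [gfib]
  have hc : gfib s t (n + 2) = s * gfib s t (n + 1) + t * gfib s t n := by rw [gfib]
  have hc' : gfib s t (n + 1 + 1) = s * gfib s t (n + 1) + t * gfib s t n := hc
  unfold gtri
  rw [h2, hc']
  field_simp
  ring
end

section
/- Let s, t be nonzero real numbers. Then for every n ≥ 0, Σ_{k=1}^{n} t^{2(n−k)}·(({k+1}_{s,t} + t·{k−1}_{s,t})/s)·({k}_{s,t})³ = {n+1 \choose 2}_{s,t}². (This is the (s,t)-analog of Σ_{k=1}^n k³ = (Σ_{k=1}^n k)².) -/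
theorem stmt8 (s t : ℝ) (hs : s ≠ 0) (ht : t ≠ 0) (n : ℕ) :
    ∑ k ∈ Finset.Icc 1 n,
        t ^ (2 * (n - k)) * ((gfib s t (k + 1) + t * gfib s t (k - 1)) / s) *
          gfib s t k ^ 3 =
      gtri s t n ^ 2 := by
  induction n with
  | zero => simp [gtri, gfib]
  | succ n ih =>
    rw [Finset.sum_Icc_succ_top (by omega)]
    have h : ∀ k ∈ Finset.Icc 1 n,
        t ^ (2 * (n + 1 - k)) * ((gfib s t (k + 1) + t * gfib s t (k - 1)) / s) *
          gfib s t k ^ 3 =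
        t ^ 2 * (t ^ (2 * (n - k)) * ((gfib s t (k + 1) + t * gfib s t (k - 1)) / s) *
          gfib s t k ^ 3) := by
      intro k hk
      have hk2 := (Finset.mem_Icc.mp hk).2
      have e : 2 * (n + 1 - k) = 2 + 2 * (n - k) := by omega
      rw [e, pow_add]
      ring
    rw [Finset.sum_congr rfl h, ← Finset.mul_sum, ih]
    have h2 : gfib s t 2 = s := by simp [gfib]
    have h3 : gfib s t (n + 1 + 1) = s * gfib s t (n + 1) + t * gfib s t n := by
      simp [gfib]
    simp only [gtri, h2, h3, Nat.sub_self, Nat.mul_zero, pow_zero, Nat.add_sub_cancel]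
    field_simp
    ring
end

section
/- For every n ≥ 0, the Fibonacci numbers satisfy Σ_{k=1}^{n} (F_{k+1} + F_{k−1})·F_k³ = F_n²·F_{n+1}² (the Fibonacci analog of the sum of cubes). -/
theorem stmt9 (n : ℕ) :
    ∑ k ∈ Finset.Icc 1 n, (Nat.fib (k + 1) + Nat.fib (k - 1)) * Nat.fib k ^ 3 =
      Nat.fib n ^ 2 * Nat.fib (n + 1) ^ 2 := by
  induction n with
  | zero => simp
  | succ n ih =>
    rw [Finset.sum_Icc_succ_top (by omega), ih, Nat.add_sub_cancel,
      show n + 1 + 1 = n + 2 from rfl, Nat.fib_add_two]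
    ring
end

section
/- For every n ≥ 0, the Pell numbers satisfy Σ_{k=1}^{n} (P_{k+1} + P_{k−1})·P_k³ = (1/2)·P_n²·P_{n+1}² (the Pell analog of the sum of cubes). -/
/-- The Pell numbers: `P 0 = 0`, `P 1 = 1`, `P (n+2) = 2·P (n+1) + P n`. -/
def pell : ℕ → ℕ
  | 0 => 0
  | 1 => 1
  | n + 2 => 2 * pell (n + 1) + pell n

theorem stmt10 (n : ℕ) :
    ∑ k ∈ Finset.Icc 1 n,
        ((pell (k + 1) : ℝ) + (pell (k - 1) : ℝ)) * (pell k : ℝ) ^ 3 =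
      (1 / 2) * (pell n : ℝ) ^ 2 * (pell (n + 1) : ℝ) ^ 2 := by
  induction n with
  | zero => simp [pell]
  | succ m ih =>
    rw [Finset.sum_Icc_succ_top (by omega), ih]
    have h : (pell (m + 1 + 1) : ℝ) = 2 * (pell (m + 1) : ℝ) + (pell m : ℝ) := by
      rw [pell]
      push_cast
      ring
    rw [Nat.add_sub_cancel, h]
    ring
end

section
/- For every n ≥ 0, the Jacobsthal numbers satisfy Σ_{k=1}^{n} 4^{n−k}·(J_{k+1} + 2·J_{k−1})·J_k³ = J_n²·J_{n+1}² (the Jacobsthal analog of the sum of cubes). -/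
/-- The Jacobsthal numbers: `J 0 = 0`, `J 1 = 1`, `J (n+2) = J (n+1) + 2·J n`. -/
def jacobsthal : ℕ → ℕ
  | 0 => 0
  | 1 => 1
  | n + 2 => jacobsthal (n + 1) + 2 * jacobsthal n

theorem stmt11 (n : ℕ) :
    ∑ k ∈ Finset.Icc 1 n,
        4 ^ (n - k) * (jacobsthal (k + 1) + 2 * jacobsthal (k - 1)) *
          jacobsthal k ^ 3 =
      jacobsthal n ^ 2 * jacobsthal (n + 1) ^ 2 := by
  induction n with
  | zero => simp [jacobsthal]
  | succ n ih =>
    rw [Finset.sum_Icc_succ_top (by omega)]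
    have h : ∑ k ∈ Finset.Icc 1 n,
        4 ^ (n + 1 - k) * (jacobsthal (k + 1) + 2 * jacobsthal (k - 1)) *
          jacobsthal k ^ 3 =
        4 * ∑ k ∈ Finset.Icc 1 n,
        4 ^ (n - k) * (jacobsthal (k + 1) + 2 * jacobsthal (k - 1)) *
          jacobsthal k ^ 3 := by
      rw [Finset.mul_sum]
      refine Finset.sum_congr rfl fun k hk => ?_
      have hk' := (Finset.mem_Icc.mp hk).2
      rw [Nat.succ_sub hk', pow_succ]
      ring
    have hJ : jacobsthal (n + 1 + 1) = jacobsthal (n + 1) + 2 * jacobsthal n := rfl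
    rw [h, ih, hJ, Nat.sub_self, Nat.add_sub_cancel]
    ring
end

section
/- For every n ≥ 0, the Mersenne numbers M_n = 2^n − 1 satisfy Σ_{k=1}^{n} 4^{n−k}·(2^k + 1)·(2^k − 1)³ = (1/3)·(2^n − 1)²·(2^{n+1} − 1)² (the Mersenne analog of the sum of cubes). -/
theorem stmt12 (n : ℕ) :
    ∑ k ∈ Finset.Icc 1 n,
        (4 : ℝ) ^ (n - k) * ((2 : ℝ) ^ k + 1) * ((2 : ℝ) ^ k - 1) ^ 3 =
      (1 / 3) * ((2 : ℝ) ^ n - 1) ^ 2 * ((2 : ℝ) ^ (n + 1) - 1) ^ 2 := by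
  induction n with
  | zero => simp
  | succ n ih =>
    rw [Finset.sum_Icc_succ_top (by omega)]
    have h : ∑ k ∈ Finset.Icc 1 n,
        (4 : ℝ) ^ (n + 1 - k) * ((2 : ℝ) ^ k + 1) * ((2 : ℝ) ^ k - 1) ^ 3 =
        4 * ∑ k ∈ Finset.Icc 1 n,
        (4 : ℝ) ^ (n - k) * ((2 : ℝ) ^ k + 1) * ((2 : ℝ) ^ k - 1) ^ 3 := by
      rw [Finset.mul_sum]
      refine Finset.sum_congr rfl fun k hk => ?_
      rw [Nat.succ_sub (Finset.mem_Icc.mp hk).2, pow_succ]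
      ring
    rw [h, ih, Nat.sub_self, pow_succ 2 (n + 1), pow_succ 2 n]
    generalize (2 : ℝ) ^ n = x
    ring
end

section
/- Let q be a real number with q ≠ 1 and q ≠ −1. Then for every n ≥ 0, Σ_{k=1}^{n} q^{2(n−k)}·((1−q^{2k})/(1−q²))·((1−q^k)/(1−q))² = [n+1 \choose 2]_q² (Warnaar's q-identity). -/
theorem stmt13 (q : ℝ) (hq1 : q ≠ 1) (hq2 : q ≠ -1) (n : ℕ) :
    ∑ k ∈ Finset.Icc 1 n,
        q ^ (2 * (n - k)) * ((1 - q ^ (2 * k)) / (1 - q ^ 2)) *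
          ((1 - q ^ k) / (1 - q)) ^ 2 =
      qtri q n ^ 2 := by
  have h1 : (1 - q) ≠ 0 := fun h => hq1 (by linarith)
  have h2 : (1 + q) ≠ 0 := fun h => hq2 (by linarith)
  have h3 : (1 - q ^ 2) = (1 - q) * (1 + q) := by ring
  induction n with
  | zero => simp [qtri, qint]
  | succ n ih =>
    rw [Finset.sum_Icc_succ_top (by omega)]
    have e : ∑ k ∈ Finset.Icc 1 n,
        q ^ (2 * (n + 1 - k)) * ((1 - q ^ (2 * k)) / (1 - q ^ 2)) *
          ((1 - q ^ k) / (1 - q)) ^ 2 = q ^ 2 * qtri q n ^ 2 := by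
      rw [← ih, Finset.mul_sum]
      refine Finset.sum_congr rfl fun k hk => ?_
      have hk' := (Finset.mem_Icc.mp hk).2
      have : 2 * (n + 1 - k) = 2 + 2 * (n - k) := by omega
      rw [this, pow_add]
      ring
    rw [e]
    simp only [qtri, qint, h3, Nat.sub_self, mul_zero, pow_zero]
    field_simp
    ring
end

section
/- Let s, t be nonzero real numbers with s² + t ≠ 0. Then for every n ≥ 0, the generalized tetrahedral numbers satisfy {n+3 \choose 3}_{s,t} = s·t·{n+2 \choose 3}_{s,t} + {n+1}_{s,t}·{n+2 \choose 2}_{s,t}. (This is the (s,t)-analog of Te_{n+1} + 2·Te_n = (n+1)·T_{n+1}.) -/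
theorem stmt14 (s t : ℝ) (hs : s ≠ 0) (ht : t ≠ 0) (hst : s ^ 2 + t ≠ 0) (n : ℕ) :
    gtet s t (n + 1) = s * t * gtet s t n + gfib s t (n + 1) * gtri s t (n + 1) := by
  have h2 : gfib s t 2 = s := by simp [gfib]
  have h3 : gfib s t 3 = s ^ 2 + t := by simp [gfib]; ring
  have h1 : gfib s t 1 = 1 := by simp [gfib]
  have hb : gfib s t (n + 2) = s * gfib s t (n + 1) + t * gfib s t n := by rw [gfib]
  have hc : gfib s t (n + 1 + 2) = s * gfib s t (n + 2) + t * gfib s t (n + 1) := by rw [gfib]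
  have e : n + 1 + 1 = n + 2 := rfl
  unfold gtet gtri
  rw [h1, h2, h3, e, hc, hb]
  field_simp
  ring
end

section
/- Let s, t be real numbers with |t| > 1, s² + 4t > 0 and |φ'_{s,t}| < |φ_{s,t}|. Then Σ_{n=1}^{∞} 1/({n}_{s,t}·{n+1}_{s,t}) = φ_{s,t} − (1+t)·ln_{s,t}(1 + φ_{s,t}/t), where ln_{s,t}(1−x) = −Σ_{n=1}^{∞} x^n/{n}_{s,t} is the (s,t)-analog of the logarithm; equivalently, Σ_{n=1}^{∞} 1/({n}_{s,t}·{n+1}_{s,t}) = φ_{s,t} + (1+t)·Σ_{n=1}^{∞} (−φ_{s,t}/t)^n/{n}_{s,t}, all series being convergent under these hypotheses. -/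
theorem gfib_aux (s t a b : ℝ) (hs : a + b = s) (hp : a * b = -t) (n : ℕ) :
    gfib s t (n + 1) - a * gfib s t n = b ^ n := by
  induction n with
  | zero => simp [gfib]
  | succ k ih =>
    have h : gfib s t (k + 1 + 1) = s * gfib s t (k + 1) + t * gfib s t k := by
      simp [gfib]
    rw [h, pow_succ, ← ih, ← hs]
    have : t = -(a * b) := by linarith
    rw [this]; ring

theorem stmt19 (s t : ℝ) (ht : 1 < |t|) (hdisc : s ^ 2 + 4 * t > 0)
    (hlt : |phiST' s t| < |phiST s t|) :
    Summable (fun n : ℕ => (-(phiST s t) / t) ^ (n + 1) / gfib s t (n + 1)) ∧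
      HasSum (fun n : ℕ => 1 / (gfib s t (n + 1) * gfib s t (n + 2)))
        (phiST s t +
          (1 + t) * ∑' n : ℕ, (-(phiST s t) / t) ^ (n + 1) / gfib s t (n + 1)) := by
  have hsq : Real.sqrt (s ^ 2 + 4 * t) ^ 2 = s ^ 2 + 4 * t := Real.sq_sqrt hdisc.le
  have hs : phiST s t + phiST' s t = s := by unfold phiST phiST'; ring
  have hp : phiST s t * phiST' s t = -t := by unfold phiST phiST'; nlinarith
  generalize phiST s t = a at *
  generalize phiST' s t = b at *
  have ht0 : t ≠ 0 := by rintro rfl; norm_num at ht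
  have hab : a * b ≠ 0 := by rw [hp]; simpa using ht0
  have ha : a ≠ 0 := left_ne_zero_of_mul hab
  have hb : b ≠ 0 := right_ne_zero_of_mul hab
  have hx : -a / t = b⁻¹ := by
    field_simp; linarith
  have hta : |t| = |a| * |b| := by rw [← abs_mul, hp, abs_neg]
  have h1 := gfib_aux s t a b hs hp
  have h2 := gfib_aux s t b a (by linarith) (by linarith)
  have hbin : ∀ n, (a - b) * gfib s t n = a ^ n - b ^ n := fun n => by
    rw [← h1 n, ← h2 n]; ring
  have hlow : ∀ n, |a| ^ n * (|a| - |b|) ≤ |a - b| * |gfib s t (n + 1)| := fun n => by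
    rw [← abs_mul, hbin]
    have h3 := abs_sub_abs_le_abs_sub (a ^ (n + 1)) (b ^ (n + 1))
    rw [abs_pow, abs_pow] at h3
    have h4 : |b| ^ n ≤ |a| ^ n := pow_le_pow_left₀ (abs_nonneg b) hlt.le n
    have h5 := mul_le_mul_of_nonneg_right h4 (abs_nonneg b)
    rw [pow_succ, pow_succ] at h3
    nlinarith
  have ha' : 0 < |a| := abs_pos.2 ha
  have hb' : 0 < |b| := abs_pos.2 hb
  have hd : 0 < |a| - |b| := by linarith
  have hF : ∀ n, gfib s t (n + 1) ≠ 0 := fun n h0 => by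
    have h3 := hlow n
    rw [h0] at h3
    have : 0 < |a| ^ n * (|a| - |b|) := by positivity
    simp at h3; linarith
  rw [hx]
  have hS : Summable (fun n : ℕ => b⁻¹ ^ (n + 1) / gfib s t (n + 1)) := by
    have hg : Summable (fun n : ℕ => (|a - b| / (|a| - |b|) / |b|) * (|t|⁻¹) ^ n) :=
      (summable_geometric_of_lt_one (by positivity) (inv_lt_one_of_one_lt₀ ht)).mul_left _
    refine Summable.of_norm_bounded hg fun n => ?_
    have hFp : 0 < |gfib s t (n + 1)| := abs_pos.2 (hF n)
    rw [Real.norm_eq_abs, abs_div, abs_pow, abs_inv, hta, inv_pow, inv_pow, mul_pow, div_div,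
      ← div_eq_mul_inv, div_div, inv_eq_one_div, div_div, div_le_div_iff₀ (by positivity) (by positivity)]
    calc 1 * ((|a| - |b|) * |b| * (|a| ^ n * |b| ^ n))
        = (|a| ^ n * (|a| - |b|)) * |b| ^ (n + 1) := by ring
      _ ≤ (|a - b| * |gfib s t (n + 1)|) * |b| ^ (n + 1) := by
          exact mul_le_mul_of_nonneg_right (hlow n) (by positivity)
      _ = _ := by ring
  refine ⟨hS, ?_⟩
  have hL := hS.hasSum
  have hL1 := (hasSum_nat_add_iff' (f := fun n : ℕ => b⁻¹ ^ (n + 1) / gfib s t (n + 1)) 1).2 hL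
  have hT := hL.add (hL1.mul_left t)
  convert hT using 1
  · funext n
    have e1 := hF n
    have e2 := hF (n + 1)
    have e3 := h1 (n + 1)
    have e4 : t = -(a * b) := by linarith
    simp only [add_assoc] at *
    norm_num at *
    field_simp
    rw [pow_succ b (n + 1), ← e3, e4]
    ring
  · have e4 : t = -(a * b) := by linarith
    simp [gfib]
    rw [e4]; field_simp; ring
end
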